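/- Let s>7/2 be an integer and α a multi-index with |α|≤s. Suppose ρ⁰∈H^{s+1}(𝕋³) with ‖ρ⁰‖_{H^{s+1}}≤K and ρ⁰≥ρ̂>0; let N∈H^s(𝕋³) with N+ρ⁰≥ρ̂/2 on 𝕋³, F∈H^s(𝕋³;ℝ³) and Θ∈H^s(𝕋³). Then for every γ>0 there is a constant C_γ=C(γ,s,K,ρ̂) such that ⟨∂^α_x(|F|²/(N+ρ⁰)), ∂^α_xΘ⟩_{L²(𝕋³)} ≤ γ‖F‖⁴_{H^s} + C_γ(1+‖(N,F)‖^{2(s+1)}_{H^s})‖∂^α_xΘ‖²_{L²}. -/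

import Mathlib

open MeasureTheory Real
open scoped ENNReal

noncomputable section

/-! ### Basic setup: periodic fields on the torus `𝕋³ = (ℝ/2πℤ)³`

Functions on the torus are modelled as `2π`-periodic functions on `ℝ³`,
with all integrals (`L²` and `H^s` norms, inner products) taken over the
fundamental cube `Q3 = [0,2π]³`. -/

/-- A point of space `ℝ³`. -/
abbrev Pt : Type := Fin 3 → ℝ

/-- Scalar fields. -/
abbrev SF : Type := Pt → ℝ

/-- Vector fields, componentwise. -/
abbrev VF : Type := Fin 3 → SF

/-- The fundamental cube `[0,2π]³` of the torus. -/
def Q3 : Set Pt := Set.univ.pi fun _ => Set.Icc 0 (2 * π)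

/-- `2π`-periodicity in each coordinate: such a function descends to `𝕋³`. -/
def PerS (f : SF) : Prop := ∀ (x : Pt) (i : Fin 3), f (x + Pi.single i (2 * π)) = f x

/-- Componentwise periodicity of a vector field. -/
def PerV (v : VF) : Prop := ∀ i, PerS (v i)

/-- SmoothS scalar field (proxy for membership in the Sobolev spaces `H^k(𝕋³)`,
together with periodicity). -/
abbrev SmoothS (f : SF) : Prop := ContDiff ℝ (⊤ : ℕ∞) f

/-- SmoothS vector field. -/
abbrev SmoothV (v : VF) : Prop := ∀ i, ContDiff ℝ (⊤ : ℕ∞) (v i)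

/-- Partial derivative `∂_i`. -/
def pd (i : Fin 3) (f : SF) : SF := fun x => fderiv ℝ f x (Pi.single i 1)

/-- Iterated partial derivative in a fixed direction. -/
def pdIter (i : Fin 3) : ℕ → SF → SF
  | 0, f => f
  | n + 1, f => pd i (pdIter i n f)

/-- The spatial derivative `∂^α_x` for a multi-index `α`. -/
def mderiv (α : Fin 3 → ℕ) (f : SF) : SF :=
  pdIter 0 (α 0) (pdIter 1 (α 1) (pdIter 2 (α 2) f))

/-- `∂^α_x` of a vector field, componentwise. -/
def mderivV (α : Fin 3 → ℕ) (v : VF) : VF := fun i => mderiv α (v i)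

/-- `L²(𝕋³)` norm of a scalar field. -/
def L2 (f : SF) : ℝ := (∫ x in Q3, (f x) ^ 2) ^ (1/2 : ℝ)

/-- `L²(𝕋³)` norm of a vector field. -/
def L2V (v : VF) : ℝ := (∫ x in Q3, ∑ i, (v i x) ^ 2) ^ (1/2 : ℝ)

/-- `L²(𝕋³)` inner product of scalar fields. -/
def ip (f g : SF) : ℝ := ∫ x in Q3, f x * g x

/-- `L²(𝕋³)` inner product of vector fields. -/
def ipV (v w : VF) : ℝ := ∫ x in Q3, ∑ i, v i x * w i x

/-- The finite set of multi-indices `α` with `|α| ≤ s`. -/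
def midx (s : ℕ) : Finset (Fin 3 → ℕ) :=
  (Fintype.piFinset fun _ => Finset.range (s + 1)).filter fun α => (∑ i, α i) ≤ s

/-- `H^s(𝕋³)` norm of a scalar field. -/
def HsNorm (s : ℕ) (f : SF) : ℝ := (∑ α ∈ midx s, (L2 (mderiv α f)) ^ 2) ^ (1/2 : ℝ)

/-- `H^s(𝕋³)` norm of a vector field. -/
def HsNormV (s : ℕ) (v : VF) : ℝ := (∑ i, (HsNorm s (v i)) ^ 2) ^ (1/2 : ℝ)

/-! ### Differential operators -/

/-- Gradient of a scalar field. -/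
def grad (f : SF) : VF := fun i => pd i f

/-- Divergence of a vector field. -/
def divv (v : VF) : SF := fun x => ∑ i, pd i (v i) x

/-- Laplacian of a scalar field. -/
def lap (f : SF) : SF := fun x => ∑ i, pd i (pd i f) x

/-- Curl of a vector field. -/
def curl (v : VF) : VF :=
  ![fun x => pd 1 (v 2) x - pd 2 (v 1) x,
    fun x => pd 2 (v 0) x - pd 0 (v 2) x,
    fun x => pd 0 (v 1) x - pd 1 (v 0) x]

/-- Cross product of vector fields. -/
def cross (a b : VF) : VF :=
  ![fun x => a 1 x * b 2 x - a 2 x * b 1 x,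
    fun x => a 2 x * b 0 x - a 0 x * b 2 x,
    fun x => a 0 x * b 1 x - a 1 x * b 0 x]

/-- Pointwise dot product of vector fields. -/
def vdot (a b : VF) : SF := fun x => ∑ i, a i x * b i x

/-- Pointwise squared Euclidean norm `|a|²` of a vector field. -/
def normSq (a : VF) : SF := fun x => ∑ i, (a i x) ^ 2

/-- Convective derivative `(u·∇)f`. -/
def conv (u : VF) (f : SF) : SF := fun x => ∑ i, u i x * pd i f x

/-- Convective derivative `(u·∇)v` of a vector field, componentwise. -/
def convV (u v : VF) : VF := fun j => conv u (v j)

/-- Symmetric gradient `D(u) = (∇u + ∇uᵀ)/2`, entrywise. -/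
def Dsym (u : VF) (i j : Fin 3) : SF := fun x => (pd j (u i) x + pd i (u j) x) / 2

/-- Squared Frobenius norm `|D(u)|²`. -/
def DabsSq (u : VF) : SF := fun x => ∑ i, ∑ j, (Dsym u i j x) ^ 2

/-- Squared Frobenius norm `|∇v|²` of the Jacobian of a vector field. -/
def gradSq (v : VF) : SF := fun x => ∑ i, ∑ j, (pd j (v i) x) ^ 2

/-- Squared Euclidean norm `|∇f|²` of the gradient of a scalar field. -/
def gradSqS (f : SF) : SF := fun x => ∑ i, (pd i f x) ^ 2

/-- Viscous stress tensor `Ψ(u) = 2μ D(u) + λ (div u) I₃`, entrywise. -/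
def Psi (μ lam : ℝ) (u : VF) (i j : Fin 3) : SF :=
  fun x => 2 * μ * Dsym u i j x + lam * divv u x * (if i = j then 1 else 0)

/-- `div Ψ(u)`, componentwise. -/
def divPsi (μ lam : ℝ) (u : VF) : VF := fun i => fun x => ∑ j, pd j (Psi μ lam u i j) x

/-- The viscous dissipation `Ψ(u):∇u = 2μ|D(u)|² + λ(div u)²`. -/
def PsiColon (μ lam : ℝ) (u : VF) : SF :=
  fun x => ∑ i, ∑ j, Psi μ lam u i j x * pd j (u i) x

/-- Pointwise time derivative of a time-dependent scalar field. -/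
def dt (f : ℝ → SF) : ℝ → SF := fun t x => deriv (fun τ => f τ x) t

/-- Pointwise time derivative of a time-dependent vector field. -/
def dtV (v : ℝ → VF) : ℝ → VF := fun t i x => deriv (fun τ => v τ i x) t

/-- The time interval `[0, T)` for `T ∈ (0, +∞]`. -/
def Dom (T : ℝ≥0∞) : Set ℝ := {t : ℝ | 0 ≤ t ∧ ENNReal.ofReal t < T}

/-- Continuity in time with values in `H^k(𝕋³)` on a time set `D`
(the class `C⁰(D, H^k)`). -/
def ContHs (k : ℕ) (D : Set ℝ) (f : ℝ → SF) : Prop :=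
  ∀ t₀ ∈ D, ∀ ε > (0:ℝ), ∃ δ > (0:ℝ), ∀ t ∈ D, |t - t₀| < δ →
    HsNorm k (fun x => f t x - f t₀ x) < ε

/-- `C⁰(D, H^k)` for vector fields. -/
def ContHsV (k : ℕ) (D : Set ℝ) (v : ℝ → VF) : Prop := ∀ i, ContHs k D fun t => v t i

/-! ### The full compressible MHD system and the electromagnetic fluid system -/

/-- Classical solution of the full compressible MHD system
`∂_tρ + div(ρu) = 0`,
`ρ(∂_tu + u·∇u) + ∇(ρθ) = div Ψ(u) + curl H × H`,
`ρ(∂_tθ + u·∇θ) + ρθ div u = κΔθ + Ψ(u):∇u + |curl H|²`,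
`∂_tH − curl(u×H) = −curl(curl H)`, `div H = 0`
on the torus, on the time set `D` (all physical constants `𝔯 = c_V = σ = μ₀ = 1`). -/
structure IsMHDSol (μ lam κ : ℝ) (D : Set ℝ) (ρ θ : ℝ → SF) (u H : ℝ → VF) : Prop where
  perρ : ∀ t ∈ D, PerS (ρ t)
  perθ : ∀ t ∈ D, PerS (θ t)
  peru : ∀ t ∈ D, PerV (u t)
  perH : ∀ t ∈ D, PerV (H t)
  smρ : ∀ t ∈ D, SmoothS (ρ t)
  smθ : ∀ t ∈ D, SmoothS (θ t)
  smu : ∀ t ∈ D, SmoothV (u t)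
  smH : ∀ t ∈ D, SmoothV (H t)
  tdρ : ∀ (x : Pt), ∀ t ∈ D, DifferentiableAt ℝ (fun τ => ρ τ x) t
  tdθ : ∀ (x : Pt), ∀ t ∈ D, DifferentiableAt ℝ (fun τ => θ τ x) t
  tdu : ∀ (i : Fin 3) (x : Pt), ∀ t ∈ D, DifferentiableAt ℝ (fun τ => u τ i x) t
  tdH : ∀ (i : Fin 3) (x : Pt), ∀ t ∈ D, DifferentiableAt ℝ (fun τ => H τ i x) t
  mass : ∀ t ∈ D, ∀ x, dt ρ t x + divv (fun i y => ρ t y * u t i y) x = 0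
  mom : ∀ t ∈ D, ∀ x, ∀ i,
    ρ t x * (dtV u t i x + convV (u t) (u t) i x) + pd i (fun y => ρ t y * θ t y) x
      = divPsi μ lam (u t) i x + cross (curl (H t)) (H t) i x
  temp : ∀ t ∈ D, ∀ x,
    ρ t x * (dt θ t x + conv (u t) (θ t) x) + ρ t x * θ t x * divv (u t) x
      = κ * lap (θ t) x + PsiColon μ lam (u t) x + normSq (curl (H t)) x
  induction : ∀ t ∈ D, ∀ x, ∀ i,
    dtV H t i x - curl (cross (u t) (H t)) i x = - curl (curl (H t)) i x
  divH : ∀ t ∈ D, ∀ x, divv (H t) x = 0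

/-- Classical solution of the electromagnetic fluid system with dielectric
constant `ε > 0`:
`∂_tρ + div(ρu) = 0`,
`ρ(∂_tu + u·∇u) + ∇(ρθ) = div Ψ(u) + (E + u×H) × H`,
`ρ(∂_tθ + u·∇θ) + ρθ div u = κΔθ + Ψ(u):∇u + |E + u×H|²`,
`ε∂_tE − curl H + E + u×H = 0`,
`∂_tH + curl E = 0`, `div H = 0`
on the torus, on the time set `D`. -/
structure IsEMSol (μ lam κ eps : ℝ) (D : Set ℝ) (ρ θ : ℝ → SF) (u E H : ℝ → VF) : Prop where
  perρ : ∀ t ∈ D, PerS (ρ t)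
  perθ : ∀ t ∈ D, PerS (θ t)
  peru : ∀ t ∈ D, PerV (u t)
  perE : ∀ t ∈ D, PerV (E t)
  perH : ∀ t ∈ D, PerV (H t)
  smρ : ∀ t ∈ D, SmoothS (ρ t)
  smθ : ∀ t ∈ D, SmoothS (θ t)
  smu : ∀ t ∈ D, SmoothV (u t)
  smE : ∀ t ∈ D, SmoothV (E t)
  smH : ∀ t ∈ D, SmoothV (H t)
  tdρ : ∀ (x : Pt), ∀ t ∈ D, DifferentiableAt ℝ (fun τ => ρ τ x) t
  tdθ : ∀ (x : Pt), ∀ t ∈ D, DifferentiableAt ℝ (fun τ => θ τ x) t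
  tdu : ∀ (i : Fin 3) (x : Pt), ∀ t ∈ D, DifferentiableAt ℝ (fun τ => u τ i x) t
  tdE : ∀ (i : Fin 3) (x : Pt), ∀ t ∈ D, DifferentiableAt ℝ (fun τ => E τ i x) t
  tdH : ∀ (i : Fin 3) (x : Pt), ∀ t ∈ D, DifferentiableAt ℝ (fun τ => H τ i x) t
  mass : ∀ t ∈ D, ∀ x, dt ρ t x + divv (fun i y => ρ t y * u t i y) x = 0
  mom : ∀ t ∈ D, ∀ x, ∀ i,
    ρ t x * (dtV u t i x + convV (u t) (u t) i x) + pd i (fun y => ρ t y * θ t y) x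
      = divPsi μ lam (u t) i x
        + cross (fun j y => E t j y + cross (u t) (H t) j y) (H t) i x
  temp : ∀ t ∈ D, ∀ x,
    ρ t x * (dt θ t x + conv (u t) (θ t) x) + ρ t x * θ t x * divv (u t) x
      = κ * lap (θ t) x + PsiColon μ lam (u t) x
        + normSq (fun j y => E t j y + cross (u t) (H t) j y) x
  faraday : ∀ t ∈ D, ∀ x, ∀ i,
    eps * dtV E t i x - curl (H t) i x + E t i x + cross (u t) (H t) i x = 0
  ampere : ∀ t ∈ D, ∀ x, ∀ i, dtV H t i x + curl (E t) i x = 0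
  divH : ∀ t ∈ D, ∀ x, divv (H t) x = 0

/-- The electric field `E⁰ = curl H⁰ − u⁰ × H⁰` induced by the limiting MHD flow. -/
def Efield (u H : VF) : VF := fun i x => curl H i x - cross u H i x

/-- `(N,U,Θ,F,G)` solves the error system obtained by subtracting the full
compressible MHD equations (background solution `(ρ⁰,u⁰,θ⁰,H⁰)`, with induced
electric field `E⁰ = curl H⁰ − u⁰×H⁰`) from the `ε`-dielectric electromagnetic
fluid system: equivalently, `(ρ⁰+N, u⁰+U, θ⁰+Θ, E⁰+F, H⁰+G)` solves the
electromagnetic fluid system. -/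
def IsErrSol (μ lam κ eps : ℝ) (D : Set ℝ) (ρ0 θ0 : ℝ → SF) (u0 H0 : ℝ → VF)
    (N Θ : ℝ → SF) (U F G : ℝ → VF) : Prop :=
  IsEMSol μ lam κ eps D
    (fun t x => ρ0 t x + N t x) (fun t x => θ0 t x + Θ t x)
    (fun t i x => u0 t i x + U t i x)
    (fun t i x => Efield (u0 t) (H0 t) i x + F t i x)
    (fun t i x => H0 t i x + G t i x)

/-- The error-system energy `‖ℰ‖_s = ‖(N,U,Θ,G)‖_s` (sum of the `H^s` norms). -/
def Enorm (s : ℕ) (N Θ : SF) (U G : VF) : ℝ :=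
  HsNorm s N + HsNormV s U + HsNorm s Θ + HsNormV s G

/-- The squared `ε`-weighted energy `⫴ℰ⫴²_s = ‖ℰ‖²_s + ε‖F‖²_s`. -/
def EnormSq (s : ℕ) (eps : ℝ) (N Θ : SF) (U F G : VF) : ℝ :=
  (Enorm s N Θ U G) ^ 2 + eps * (HsNormV s F) ^ 2

end


/-- Iterated partial derivative along a list of directions. -/
noncomputable def ld : List (Fin 3) → SF → SF
  | [], f => f
  | i :: l, f => pd i (ld l f)

/-- Squared `L²` norm. -/
noncomputable def Sq (f : SF) : ℝ := ∫ x in Q3, (f x) ^ 2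

theorem smooth_pd {f : SF} (hf : SmoothS f) (i : Fin 3) : SmoothS (pd i f) := by
  unfold pd
  have h1 : ContDiff ℝ (⊤ : ℕ∞) (fderiv ℝ f) := hf.fderiv_right (by simp)
  exact h1.clm_apply contDiff_const

theorem smooth_ld {f : SF} (hf : SmoothS f) (l : List (Fin 3)) : SmoothS (ld l f) := by
  induction l with
  | nil => exact hf
  | cons i l ih => exact smooth_pd ih i

theorem smooth_diff {f : SF} (hf : SmoothS f) : Differentiable ℝ f :=
  hf.differentiable (by simp)

theorem ld_append (l m : List (Fin 3)) (f : SF) : ld (l ++ m) f = ld l (ld m f) := by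
  induction l with
  | nil => rfl
  | cons i l ih => simp [ld, ih]

theorem pdIter_eq_ld (i : Fin 3) (n : ℕ) (f : SF) : pdIter i n f = ld (List.replicate n i) f := by
  induction n with
  | zero => rfl
  | succ n ih => simp [pdIter, ih, List.replicate_succ, ld]

theorem pd_comm {f : SF} (hf : SmoothS f) (i j : Fin 3) : pd i (pd j f) = pd j (pd i f) := by
  funext x
  have hd : DifferentiableAt ℝ (fderiv ℝ f) x := by
    have h1 : ContDiff ℝ (⊤ : ℕ∞) (fderiv ℝ f) := hf.fderiv_right (by simp)
    exact (h1.differentiable (by simp)) x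
  have key : ∀ a b : Fin 3, pd a (pd b f) x
      = fderiv ℝ (fderiv ℝ f) x (Pi.single a 1) (Pi.single b 1) := by
    intro a b
    unfold pd
    rw [fderiv_clm_apply hd (differentiableAt_const _)]
    simp
  rw [key, key]
  have hs : IsSymmSndFDerivAt ℝ f x := by
    apply ContDiffAt.isSymmSndFDerivAt (n := (⊤ : ℕ∞)) hf.contDiffAt
    simp
    exact WithTop.coe_le_coe.2 (le_top : (2:ℕ∞) ≤ ⊤)
  exact hs _ _

theorem pd_ld_comm {f : SF} (hf : SmoothS f) (i : Fin 3) (l : List (Fin 3)) :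
    pd i (ld l f) = ld l (pd i f) := by
  induction l with
  | nil => rfl
  | cons j l ih => simp only [ld]; rw [pd_comm (smooth_ld hf l), ih]

theorem mderiv_eq_ld (α : Fin 3 → ℕ) (f : SF) : mderiv α f
    = ld (List.replicate (α 0) 0 ++ (List.replicate (α 1) 1 ++ List.replicate (α 2) 2)) f := by
  rw [ld_append, ld_append]
  simp only [mderiv, pdIter_eq_ld]

theorem pd_mderiv {f : SF} (hf : SmoothS f) (i : Fin 3) (α : Fin 3 → ℕ) :
    ∃ β : Fin 3 → ℕ, ∑ j, β j = ∑ j, α j + 1 ∧ pd i (mderiv α f) = mderiv β f := by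
  refine ⟨α + Pi.single i 1, ?_, ?_⟩
  · simp [Finset.sum_add_distrib]
  · simp only [mderiv, pdIter_eq_ld]
    have e : ∀ n : ℕ, ∀ k : Fin 3, ∀ g : SF,
      ld (List.replicate (n+1) k) g = pd k (ld (List.replicate n k) g) := by
      intro n k g; simp [List.replicate_succ, ld]
    have h2 := smooth_ld hf (List.replicate (α 2) 2)
    have h1 := smooth_ld h2 (List.replicate (α 1) 1)
    fin_cases i
    · simp [e]
    · simp [e]
      rw [pd_ld_comm h1]
    · simp [e]
      rw [pd_ld_comm h1, pd_ld_comm h2]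

theorem ld_eq_mderiv {f : SF} (hf : SmoothS f) (l : List (Fin 3)) :
    ∃ β : Fin 3 → ℕ, ∑ j, β j = l.length ∧ ld l f = mderiv β f := by
  induction l with
  | nil => exact ⟨0, by simp, rfl⟩
  | cons i l ih =>
    obtain ⟨β, h1, h2⟩ := ih
    obtain ⟨β', h3, h4⟩ := pd_mderiv hf i β
    exact ⟨β', by simp [h3, h1], by simp only [ld]; rw [h2, h4]⟩

theorem Sq_nonneg (f : SF) : 0 ≤ Sq f := integral_nonneg fun _ => sq_nonneg _

theorem half_sq {a : ℝ} (ha : 0 ≤ a) : (a ^ (1/2 : ℝ)) ^ 2 = a := by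
  rw [← Real.sqrt_eq_rpow, Real.sq_sqrt ha]

theorem L2_sq (f : SF) : (L2 f) ^ 2 = Sq f := half_sq (Sq_nonneg f)

theorem HsNorm_nonneg (s : ℕ) (f : SF) : 0 ≤ HsNorm s f :=
  Real.rpow_nonneg (Finset.sum_nonneg fun _ _ => sq_nonneg _) _

theorem HsNormV_nonneg (s : ℕ) (f : VF) : 0 ≤ HsNormV s f :=
  Real.rpow_nonneg (Finset.sum_nonneg fun _ _ => sq_nonneg _) _

theorem HsNorm_le_V (s : ℕ) (v : VF) (i : Fin 3) : (HsNorm s (v i)) ^ 2 ≤ (HsNormV s v) ^ 2 := by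
  unfold HsNormV
  rw [half_sq (Finset.sum_nonneg fun _ _ => sq_nonneg _)]
  exact Finset.single_le_sum (f := fun i => (HsNorm s (v i)) ^ 2)
    (fun _ _ => sq_nonneg _) (Finset.mem_univ i)

theorem Sq_ld_le {f : SF} (hf : SmoothS f) (s : ℕ) (l : List (Fin 3)) (hl : l.length ≤ s) :
    Sq (ld l f) ≤ (HsNorm s f) ^ 2 := by
  obtain ⟨β, h1, h2⟩ := ld_eq_mderiv hf l
  unfold HsNorm
  rw [half_sq (Finset.sum_nonneg fun _ _ => sq_nonneg _), h2, ← L2_sq]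
  refine Finset.single_le_sum (f := fun α => (L2 (mderiv α f)) ^ 2)
    (fun _ _ => sq_nonneg _) ?_
  have hb : ∑ j, β j ≤ s := h1 ▸ hl
  simp only [midx, Finset.mem_filter, Fintype.mem_piFinset, Finset.mem_range]
  refine ⟨fun i => ?_, hb⟩
  have := Finset.single_le_sum (f := β) (fun _ _ => Nat.zero_le _) (Finset.mem_univ i)
  omega

theorem pd_add {f g : SF} (hf : SmoothS f) (hg : SmoothS g) (i : Fin 3) :
    pd i (fun x => f x + g x) = fun x => pd i f x + pd i g x := by
  funext x
  unfold pd
  rw [fderiv_fun_add (smooth_diff hf x) (smooth_diff hg x)]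
  rfl

theorem pd_mul {f g : SF} (hf : SmoothS f) (hg : SmoothS g) (i : Fin 3) :
    pd i (fun x => f x * g x) = fun x => f x * pd i g x + pd i f x * g x := by
  funext x
  unfold pd
  rw [fderiv_fun_mul (smooth_diff hf x) (smooth_diff hg x)]
  simp; ring

theorem ld_add {f g : SF} (hf : SmoothS f) (hg : SmoothS g) (l : List (Fin 3)) :
    ld l (fun x => f x + g x) = fun x => ld l f x + ld l g x := by
  induction l with
  | nil => rfl
  | cons i l ih => simp only [ld]; rw [ih, pd_add (smooth_ld hf l) (smooth_ld hg l)]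

/-- Sum over pairs of words of products of derivatives. -/
noncomputable def lsum (f g : SF) : List (List (Fin 3) × List (Fin 3)) → SF
  | [] => fun _ => 0
  | p :: L => fun x => ld p.1 f x * ld p.2 g x + lsum f g L x

theorem smooth_lsum {f g : SF} (hf : SmoothS f) (hg : SmoothS g)
    (L : List (List (Fin 3) × List (Fin 3))) : SmoothS (lsum f g L) := by
  induction L with
  | nil => exact contDiff_const
  | cons p L ih => exact ((smooth_ld hf _).mul (smooth_ld hg _)).add ih

/-- differentiate each pair -/
def stepL (i : Fin 3) : List (List (Fin 3) × List (Fin 3)) → List (List (Fin 3) × List (Fin 3))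
  | [] => []
  | p :: L => (p.1, i :: p.2) :: (i :: p.1, p.2) :: stepL i L

theorem pd_lsum {f g : SF} (hf : SmoothS f) (hg : SmoothS g) (i : Fin 3)
    (L : List (List (Fin 3) × List (Fin 3))) : pd i (lsum f g L) = lsum f g (stepL i L) := by
  induction L with
  | nil => funext x; simp [lsum, stepL, pd]
  | cons p L ih =>
    simp only [lsum, stepL]
    rw [pd_add ((smooth_ld hf _).mul (smooth_ld hg _)) (smooth_lsum hf hg L),
      pd_mul (smooth_ld hf _) (smooth_ld hg _), ih]
    funext x
    simp only [ld]; ring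

theorem stepL_length (i : Fin 3) (L : List (List (Fin 3) × List (Fin 3))) :
    (stepL i L).length = 2 * L.length := by
  induction L with
  | nil => rfl
  | cons p L ih => simp [stepL, ih]; ring

theorem stepL_mem (i : Fin 3) (n : ℕ) (L : List (List (Fin 3) × List (Fin 3)))
    (h : ∀ p ∈ L, 1 ≤ p.1.length ∧ p.1.length + p.2.length = n) :
    ∀ p ∈ stepL i L, 1 ≤ p.1.length ∧ p.1.length + p.2.length = n + 1 := by
  induction L with
  | nil => simp [stepL]
  | cons q L ih =>
    intro p hp
    have hq := h q (by simp)
    have ih' := ih (fun p hp => h p (by simp [hp]))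
    simp only [stepL, List.mem_cons] at hp
    rcases hp with rfl | rfl | hp
    · simp; omega
    · simp; omega
    · exact ih' p hp

/-- Leibniz remainder index list. -/
def restL : List (Fin 3) → List (List (Fin 3) × List (Fin 3))
  | [] => []
  | i :: l => ([i], l) :: stepL i (restL l)

theorem restL_length (l : List (Fin 3)) : (restL l).length + 1 = 2 ^ l.length := by
  induction l with
  | nil => rfl
  | cons i l ih => simp [restL, stepL_length, pow_succ]; omega

theorem restL_mem (l : List (Fin 3)) :
    ∀ p ∈ restL l, 1 ≤ p.1.length ∧ p.1.length + p.2.length = l.length := by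
  induction l with
  | nil => simp [restL]
  | cons i l ih =>
    intro p hp
    simp only [restL, List.mem_cons] at hp
    rcases hp with rfl | hp
    · simp; omega
    · exact stepL_mem i _ _ ih p hp

theorem ld_mul {f g : SF} (hf : SmoothS f) (hg : SmoothS g) (l : List (Fin 3)) :
    ld l (fun x => f x * g x) = fun x => f x * ld l g x + lsum f g (restL l) x := by
  induction l with
  | nil => funext x; simp [ld, lsum, restL]
  | cons i l ih =>
    simp only [ld]
    rw [ih, pd_add (hf.mul (smooth_ld hg l)) (smooth_lsum hf hg _), pd_mul hf (smooth_ld hg l),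
      pd_lsum hf hg]
    funext x
    simp only [restL, lsum, ld]; ring

theorem ld_const (c : ℝ) (i : Fin 3) (l : List (Fin 3)) : ld (i :: l) (fun _ => c) = fun _ => 0 := by
  induction l generalizing i with
  | nil => funext x; simp [ld, pd]
  | cons j l ih => rw [ld, ih]; funext x; simp [pd]

/-- The interval `[0,2π]`. -/
def I2 : Set ℝ := Set.Icc 0 (2 * π)

theorem one_d {u v : ℝ → ℝ} (hu : ∀ r, HasDerivAt u (v r) r) (hv : Continuous v)
    {t : ℝ} (ht : t ∈ I2) :
    ENNReal.ofReal (u t ^ 2) ≤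
      2 * ∫⁻ r in I2, (ENNReal.ofReal (u r ^ 2) + ENNReal.ofReal (v r ^ 2)) := by
  have hpi := Real.pi_gt_three
  have hcu : Continuous u := continuous_iff_continuousAt.2 fun r => (hu r).continuousAt
  have hI : volume I2 = ENNReal.ofReal (2 * π) := by simp [I2]
  have hIr : (volume.real I2) = 2 * π := by
    rw [measureReal_def, hI, ENNReal.toReal_ofReal (by positivity)]
  have hint : ∀ w : ℝ → ℝ, Continuous w → IntegrableOn w I2 := fun w hw =>
    hw.continuousOn.integrableOn_compact isCompact_Icc
  have hcsum : Continuous fun r => u r ^ 2 + v r ^ 2 := by fun_prop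
  obtain ⟨r0, hr0, hr0'⟩ := exists_le_setAverage (μ := volume) (s := I2) (f := fun r => u r ^ 2)
    (by rw [hI]; simp [Real.pi_pos]) (by rw [hI]; exact ENNReal.ofReal_ne_top) (hint _ (by fun_prop))
  rw [setAverage_eq, hIr] at hr0'
  set T := ∫ r in I2, (u r ^ 2 + v r ^ 2) with hT
  have h1 : ∫ r in I2, u r ^ 2 ≤ T :=
    setIntegral_mono (hint _ (by fun_prop)) (hint _ hcsum) fun r => by
      have := sq_nonneg (v r); simp only; linarith
  have hT0 : 0 ≤ T := integral_nonneg fun r => by positivity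
  have h2 : u r0 ^ 2 ≤ T := by
    refine hr0'.trans ?_
    rw [smul_eq_mul]
    have h0 : 0 ≤ ∫ r in I2, u r ^ 2 := integral_nonneg fun r => by positivity
    have h3 : (2 * π)⁻¹ ≤ 1 := inv_le_one_of_one_le₀ (by linarith)
    nlinarith
  have h3 : u t ^ 2 - u r0 ^ 2 ≤ T := by
    have hftc : ∫ r in r0..t, 2 * (u r * v r) = u t ^ 2 - u r0 ^ 2 := by
      refine intervalIntegral.integral_eq_sub_of_hasDerivAt (f := fun r => u r ^ 2) (fun r _ => ?_)
        (Continuous.intervalIntegrable (by fun_prop) _ _)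
      have := (hu r).pow 2
      exact HasDerivAt.congr_deriv this (by push_cast; ring)
    rw [← hftc]
    refine (le_abs_self _).trans ?_
    rw [← Real.norm_eq_abs]
    refine intervalIntegral.norm_integral_le_integral_norm_uIoc.trans ?_
    have hsub : Set.uIoc r0 t ⊆ I2 := by
      intro r hr
      have := Set.uIoc_subset_uIcc hr
      exact (Set.uIcc_subset_Icc hr0 ht) this
    refine (setIntegral_mono_set (hint (fun r => ‖2 * (u r * v r)‖) (by fun_prop)) ?_ hsub.eventuallyLE).trans ?_
    · exact Filter.Eventually.of_forall fun r => norm_nonneg _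
    · refine setIntegral_mono (hint _ (by fun_prop)) (hint _ hcsum) fun r => ?_
      simp only [Real.norm_eq_abs]
      rw [abs_le]
      constructor <;> nlinarith [sq_nonneg (u r + v r), sq_nonneg (u r - v r)]
  have h4 : u t ^ 2 ≤ 2 * T := by linarith
  calc ENNReal.ofReal (u t ^ 2) ≤ ENNReal.ofReal (2 * T) := ENNReal.ofReal_le_ofReal h4
    _ = 2 * ENNReal.ofReal T := by rw [ENNReal.ofReal_mul (by norm_num)]; simp
    _ = _ := by
      rw [hT, ofReal_integral_eq_lintegral_ofReal (hint _ hcsum)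
        (Filter.Eventually.of_forall fun r => by positivity)]
      congr 1
      refine lintegral_congr fun r => ?_
      rw [ENNReal.ofReal_add (sq_nonneg _) (sq_nonneg _)]

/-- `f²` as an extended nonnegative real. -/
noncomputable def qq (f : SF) : Pt → ℝ≥0∞ := fun x => ENNReal.ofReal (f x ^ 2)

theorem meas_qq {f : SF} (hf : SmoothS f) : Measurable (qq f) := by
  have := hf.continuous
  unfold qq
  exact ENNReal.measurable_ofReal.comp (this.pow 2).measurable

theorem cont_qq {f : SF} (hf : SmoothS f) : Continuous (qq f) := by
  have := hf.continuous
  unfold qq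
  exact ENNReal.continuous_ofReal.comp (this.pow 2)

theorem one_dir {f : SF} (hf : SmoothS f) (i : Fin 3) (x : Pt) (hx : x i ∈ I2) :
    qq f x ≤ 2 * ∫⁻ r in I2, (qq f (Function.update x i r) + qq (pd i f) (Function.update x i r)) := by
  have hu : ∀ r, HasDerivAt (fun r => f (Function.update x i r))
      (pd i f (Function.update x i r)) r := by
    intro r
    exact (smooth_diff hf _).hasFDerivAt.comp_hasDerivAt r (hasDerivAt_update x i r)
  have hv : Continuous fun r => pd i f (Function.update x i r) :=
    (smooth_pd hf i).continuous.comp (continuous_const.update i continuous_id)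
  have := one_d hu hv hx
  simpa [qq] using this

theorem meas_cube : volume.restrict Q3 = Measure.pi fun _ : Fin 3 => volume.restrict I2 := by
  rw [Q3, volume_pi, Measure.restrict_pi_pi]; rfl

theorem fubini3 {g : Pt → ℝ≥0∞} (hg : Measurable g) :
    ∫⁻ x in Q3, g x = ∫⁻ a in I2, ∫⁻ b in I2, ∫⁻ c in I2, g ![a, b, c] := by
  rw [meas_cube, lintegral_eq_lmarginal_univ (0 : Pt)]
  have : (Finset.univ : Finset (Fin 3)) = insert 0 (insert 1 {2}) := by decide
  rw [this, lmarginal_insert _ hg (by decide)]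
  refine lintegral_congr fun a => ?_
  rw [lmarginal_insert _ hg (by decide)]
  refine lintegral_congr fun b => ?_
  rw [lmarginal_singleton]
  refine lintegral_congr fun c => ?_
  congr 1
  funext i
  fin_cases i <;> simp [Function.update]

theorem int_qq {f : SF} (hf : SmoothS f) : ∫⁻ x in Q3, qq f x = ENNReal.ofReal (Sq f) := by
  have := hf.continuous
  unfold Sq qq
  rw [ofReal_integral_eq_lintegral_ofReal]
  · have hc : IsCompact Q3 := isCompact_univ_pi fun _ => isCompact_Icc
    exact (show Continuous fun x => f x ^ 2 from this.pow 2).continuousOn.integrableOn_compact hc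
  · exact Filter.Eventually.of_forall fun r => by positivity

theorem dir0 {f : SF} (hf : SmoothS f) {a : ℝ} (ha : a ∈ I2) (b c : ℝ) :
    qq f ![a, b, c] ≤ 2 * ∫⁻ r in I2, (qq f ![r, b, c] + qq (pd 0 f) ![r, b, c]) := by
  have := one_dir hf 0 ![a, b, c] ha
  refine this.trans (le_of_eq ?_)
  have e : ∀ r, Function.update ![a, b, c] 0 r = ![r, b, c] := by
    intro r; funext i; fin_cases i <;> simp [Function.update]
  simp only [e]

theorem dir1 {f : SF} (hf : SmoothS f) {b : ℝ} (hb : b ∈ I2) (a c : ℝ) :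
    qq f ![a, b, c] ≤ 2 * ∫⁻ r in I2, (qq f ![a, r, c] + qq (pd 1 f) ![a, r, c]) := by
  have := one_dir hf 1 ![a, b, c] hb
  refine this.trans (le_of_eq ?_)
  have e : ∀ r, Function.update ![a, b, c] 1 r = ![a, r, c] := by
    intro r; funext i; fin_cases i <;> simp [Function.update]
  simp only [e]

theorem dir2 {f : SF} (hf : SmoothS f) {c : ℝ} (hc : c ∈ I2) (a b : ℝ) :
    qq f ![a, b, c] ≤ 2 * ∫⁻ r in I2, (qq f ![a, b, r] + qq (pd 2 f) ![a, b, r]) := by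
  have := one_dir hf 2 ![a, b, c] hc
  refine this.trans (le_of_eq ?_)
  have e : ∀ r, Function.update ![a, b, c] 2 r = ![a, b, r] := by
    intro r; funext i; fin_cases i <;> simp [Function.update]
  simp only [e]

/-- One-directional energy density. -/
noncomputable def E1 (i : Fin 3) (f : SF) : Pt → ℝ≥0∞ := fun x => qq f x + qq (pd i f) x

/-- Two-directional energy density. -/
noncomputable def E2 (i j : Fin 3) (f : SF) : Pt → ℝ≥0∞ := fun x => E1 j f x + E1 j (pd i f) x

/-- Three-directional energy density. -/
noncomputable def E3 (f : SF) : Pt → ℝ≥0∞ := fun x => E2 1 2 f x + E2 1 2 (pd 0 f) x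

theorem cont_E1 {f : SF} (hf : SmoothS f) (i : Fin 3) : Continuous (E1 i f) :=
  (cont_qq hf).add (cont_qq (smooth_pd hf i))

theorem cont_E2 {f : SF} (hf : SmoothS f) (i j : Fin 3) : Continuous (E2 i j f) :=
  (cont_E1 hf j).add (cont_E1 (smooth_pd hf i) j)

theorem cont_E3 {f : SF} (hf : SmoothS f) : Continuous (E3 f) :=
  (cont_E2 hf 1 2).add (cont_E2 (smooth_pd hf 0) 1 2)

theorem measI2 : MeasurableSet I2 := measurableSet_Icc

theorem step_le {φ ψ Φ Ψ : ℝ → ℝ≥0∞} (k : ℝ≥0∞) (h1 : ∀ r ∈ I2, φ r ≤ k * Φ r)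
    (h2 : ∀ r ∈ I2, ψ r ≤ k * Ψ r) (hm : Measurable fun r => Φ r + Ψ r) :
    2 * ∫⁻ r in I2, (φ r + ψ r) ≤ 2 * k * ∫⁻ r in I2, (Φ r + Ψ r) := by
  rw [mul_assoc, ← lintegral_const_mul k hm]
  gcongr 2 * ?_
  refine setLIntegral_mono' measI2 fun r hr => ?_
  rw [mul_add]
  exact add_le_add (h1 r hr) (h2 r hr)

theorem vec_cont : Continuous fun p : ℝ × ℝ × ℝ => (![p.1, p.2.1, p.2.2] : Pt) := by
  refine continuous_pi fun i => ?_
  fin_cases i <;> simp <;> fun_prop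

theorem meas3 {g : Pt → ℝ≥0∞} (hg : Continuous g) {α : Type*} [MeasurableSpace α]
    {u v w : α → ℝ} (hu : Measurable u) (hv : Measurable v) (hw : Measurable w) :
    Measurable fun p => g ![u p, v p, w p] :=
  (hg.comp vec_cont).measurable.comp (hu.prodMk (hv.prodMk hw))

theorem bd01 {f : SF} (hf : SmoothS f) {a b : ℝ} (ha : a ∈ I2) (hb : b ∈ I2) (c : ℝ) :
    qq f ![a, b, c] ≤ 4 * ∫⁻ x in I2, ∫⁻ y in I2, E2 0 1 f ![x, y, c] := by
  refine (dir0 hf ha b c).trans ?_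
  have h := step_le (φ := fun r => qq f ![r, b, c]) (ψ := fun r => qq (pd 0 f) ![r, b, c])
    (Φ := fun r => ∫⁻ y in I2, E1 1 f ![r, y, c])
    (Ψ := fun r => ∫⁻ y in I2, E1 1 (pd 0 f) ![r, y, c]) 2
    (fun r _ => dir1 hf hb r c) (fun r _ => dir1 (smooth_pd hf 0) hb r c) ?_
  · refine h.trans (le_of_eq ?_)
    congr 1
    · norm_num
    · refine lintegral_congr fun r => ?_
      rw [← lintegral_add_left]
      · rfl
      · exact meas3 (cont_E1 hf 1) (by fun_prop) (by fun_prop) (by fun_prop)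
  · apply Measurable.add
    · exact Measurable.lintegral_prod_right
        (meas3 (cont_E1 hf 1) (u := fun p : ℝ × ℝ => p.1) (v := fun p => p.2) (w := fun _ => c)
          (by fun_prop) (by fun_prop) (by fun_prop))
    · exact Measurable.lintegral_prod_right
        (meas3 (cont_E1 (smooth_pd hf 0) 1) (u := fun p : ℝ × ℝ => p.1) (v := fun p => p.2)
          (w := fun _ => c) (by fun_prop) (by fun_prop) (by fun_prop))

theorem bd12 {f : SF} (hf : SmoothS f) {b c : ℝ} (hb : b ∈ I2) (hc : c ∈ I2) (a : ℝ) :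
    qq f ![a, b, c] ≤ 4 * ∫⁻ y in I2, ∫⁻ z in I2, E2 1 2 f ![a, y, z] := by
  refine (dir1 hf hb a c).trans ?_
  have h := step_le (φ := fun r => qq f ![a, r, c]) (ψ := fun r => qq (pd 1 f) ![a, r, c])
    (Φ := fun r => ∫⁻ y in I2, E1 2 f ![a, r, y])
    (Ψ := fun r => ∫⁻ y in I2, E1 2 (pd 1 f) ![a, r, y]) 2
    (fun r _ => dir2 hf hc a r) (fun r _ => dir2 (smooth_pd hf 1) hc a r) ?_
  · refine h.trans (le_of_eq ?_)
    congr 1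
    · norm_num
    · refine lintegral_congr fun r => ?_
      rw [← lintegral_add_left]
      · rfl
      · exact meas3 (cont_E1 hf 2) (by fun_prop) (by fun_prop) (by fun_prop)
  · apply Measurable.add
    · exact Measurable.lintegral_prod_right
        (meas3 (cont_E1 hf 2) (u := fun p : ℝ × ℝ => a) (v := fun p => p.1) (w := fun p => p.2)
          (by fun_prop) (by fun_prop) (by fun_prop))
    · exact Measurable.lintegral_prod_right
        (meas3 (cont_E1 (smooth_pd hf 1) 2) (u := fun p : ℝ × ℝ => a) (v := fun p => p.1)
          (w := fun p => p.2) (by fun_prop) (by fun_prop) (by fun_prop))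

theorem meas_inner {g : Pt → ℝ≥0∞} (hg : Continuous g) :
    Measurable fun p : ℝ × ℝ => ∫⁻ z in I2, g ![p.1, p.2, z] :=
  Measurable.lintegral_prod_right
    (meas3 hg (u := fun p : (ℝ × ℝ) × ℝ => p.1.1) (v := fun p => p.1.2) (w := fun p => p.2)
      (by fun_prop) (by fun_prop) (by fun_prop))

theorem meas_innerA {g : Pt → ℝ≥0∞} (hg : Continuous g) (a : ℝ) :
    Measurable fun y : ℝ => ∫⁻ z in I2, g ![a, y, z] :=
  Measurable.lintegral_prod_right
    (meas3 hg (u := fun _ : ℝ × ℝ => a) (v := fun p => p.1) (w := fun p => p.2)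
      (by fun_prop) (by fun_prop) (by fun_prop))

theorem meas_inner2 {g : Pt → ℝ≥0∞} (hg : Continuous g) :
    Measurable fun a : ℝ => ∫⁻ y in I2, ∫⁻ z in I2, g ![a, y, z] :=
  Measurable.lintegral_prod_right (meas_inner hg)

theorem bd012 {f : SF} (hf : SmoothS f) {a b c : ℝ} (ha : a ∈ I2) (hb : b ∈ I2) (hc : c ∈ I2) :
    qq f ![a, b, c] ≤ 8 * ∫⁻ x in Q3, E3 f x := by
  refine (dir0 hf ha b c).trans ?_
  have h := step_le (φ := fun r => qq f ![r, b, c]) (ψ := fun r => qq (pd 0 f) ![r, b, c])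
    (Φ := fun r => ∫⁻ y in I2, ∫⁻ z in I2, E2 1 2 f ![r, y, z])
    (Ψ := fun r => ∫⁻ y in I2, ∫⁻ z in I2, E2 1 2 (pd 0 f) ![r, y, z]) 4
    (fun r _ => bd12 hf hb hc r) (fun r _ => bd12 (smooth_pd hf 0) hb hc r) ?_
  · refine h.trans (le_of_eq ?_)
    congr 1
    · norm_num
    · rw [fubini3 (cont_E3 hf).measurable]
      refine lintegral_congr fun r => ?_
      rw [← lintegral_add_left]
      · refine lintegral_congr fun y => ?_
        rw [← lintegral_add_left]
        · rfl
        · exact meas3 (cont_E2 hf 1 2) (by fun_prop) (by fun_prop) (by fun_prop)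
      · exact meas_innerA (cont_E2 hf 1 2) r
  · exact (meas_inner2 (cont_E2 hf 1 2)).add (meas_inner2 (cont_E2 (smooth_pd hf 0) 1 2))

theorem qq_mul (f g : SF) (x : Pt) : qq (fun x => f x * g x) x = qq f x * qq g x := by
  simp only [qq]
  rw [← ENNReal.ofReal_mul (sq_nonneg _), mul_pow]

theorem prod30 {f g : SF} (hf : SmoothS f) (hg : SmoothS g) :
    ∫⁻ x in Q3, qq (fun x => f x * g x) x ≤ 8 * (∫⁻ x in Q3, E3 f x) * ∫⁻ x in Q3, qq g x := by
  rw [← lintegral_const_mul _ (meas_qq hg)]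
  have hQ : MeasurableSet Q3 := MeasurableSet.univ_pi fun _ => measurableSet_Icc
  refine setLIntegral_mono' hQ fun x hx => ?_
  rw [qq_mul]
  gcongr
  have e : x = ![x 0, x 1, x 2] := by funext i; fin_cases i <;> rfl
  have hx' : ∀ i, x i ∈ I2 := fun i => hx i (Set.mem_univ i)
  have := bd012 hf (hx' 0) (hx' 1) (hx' 2)
  rwa [← e] at this

theorem prod21 {f g : SF} (hf : SmoothS f) (hg : SmoothS g) :
    ∫⁻ x in Q3, qq (fun x => f x * g x) x
      ≤ 8 * (∫⁻ x in Q3, E2 0 1 f x) * ∫⁻ x in Q3, E1 2 g x := by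
  have hcf := cont_E2 hf 0 1
  have hcg := cont_E1 hg 2
  rw [fubini3 (meas_qq (hf.mul hg)), fubini3 hcf.measurable, fubini3 hcg.measurable]
  set A : ℝ → ℝ≥0∞ := fun c => ∫⁻ x in I2, ∫⁻ y in I2, E2 0 1 f ![x, y, c] with hA
  set B : ℝ → ℝ → ℝ≥0∞ := fun a b => ∫⁻ z in I2, E1 2 g ![a, b, z] with hB
  have mA : Measurable A := by
    have h2 : Measurable fun p : ℝ × ℝ => ∫⁻ y in I2, E2 0 1 f ![p.2, y, p.1] :=
      Measurable.lintegral_prod_right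
        (meas3 hcf (u := fun p : (ℝ × ℝ) × ℝ => p.1.2) (v := fun p => p.2) (w := fun p => p.1.1)
          (by fun_prop) (by fun_prop) (by fun_prop))
    exact Measurable.lintegral_prod_right h2
  have mB : Measurable fun p : ℝ × ℝ => B p.1 p.2 := meas_inner hcg
  have eA : ∫⁻ c in I2, A c = ∫⁻ a in I2, ∫⁻ b in I2, ∫⁻ c in I2, E2 0 1 f ![a, b, c] := by
    rw [hA, lintegral_lintegral_swap]
    · refine lintegral_congr fun a => ?_
      rw [lintegral_lintegral_swap]
      exact (meas3 hcf (u := fun p : ℝ × ℝ => a) (v := fun p => p.2) (w := fun p => p.1)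
        (by fun_prop) (by fun_prop) (by fun_prop)).aemeasurable
    · have h2 : Measurable fun p : ℝ × ℝ => ∫⁻ y in I2, E2 0 1 f ![p.2, y, p.1] :=
        Measurable.lintegral_prod_right
          (meas3 hcf (u := fun p : (ℝ × ℝ) × ℝ => p.1.2) (v := fun p => p.2) (w := fun p => p.1.1)
            (by fun_prop) (by fun_prop) (by fun_prop))
      exact h2.aemeasurable
  rw [← eA]
  have mB1 : ∀ a, Measurable (B a) := fun a => meas_innerA hcg a
  have mB2 : Measurable fun a => ∫⁻ b in I2, B a b := Measurable.lintegral_prod_right mB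
  rw [← lintegral_const_mul _ mB2]
  refine setLIntegral_mono' measI2 fun a ha => ?_
  rw [← lintegral_const_mul _ (mB1 a)]
  refine setLIntegral_mono' measI2 fun b hb => ?_
  have : 8 * (∫⁻ c in I2, A c) * B a b = ∫⁻ c in I2, (8 * B a b) * A c := by
    rw [lintegral_const_mul _ mA]; ring
  calc _ ≤ ∫⁻ c in I2, (8 * B a b) * A c := by
        refine setLIntegral_mono' measI2 fun c hc => ?_
        rw [qq_mul]
        calc _ ≤ (4 * A c) * (2 * B a b) := mul_le_mul' (bd01 hf ha hb c) (dir2 hg hc a b)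
          _ = _ := by ring
    _ = _ := this.symm

/-- All derivatives up to order `n` have squared `L²` norm at most `B`. -/
def Bd (n : ℕ) (B : ℝ) (f : SF) : Prop := ∀ l : List (Fin 3), l.length ≤ n → Sq (ld l f) ≤ B

theorem Bd.mono {m n : ℕ} {A B : ℝ} {f : SF} (h : Bd n A f) (hm : m ≤ n) (hAB : A ≤ B) :
    Bd m B f := fun l hl => (h l (hl.trans hm)).trans hAB

theorem Bd.nonneg {n : ℕ} {A : ℝ} {f : SF} (h : Bd n A f) : 0 ≤ A :=
  (Sq_nonneg _).trans (h [] (Nat.zero_le _))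

theorem Bd.ld {n k : ℕ} {A : ℝ} {f : SF} (h : Bd n A f) (p : List (Fin 3))
    (hk : k + p.length ≤ n) : Bd k A (ld p f) := by
  intro l hl
  rw [← ld_append]
  exact h _ (by simp; omega)

theorem Bd.pd {n : ℕ} {A : ℝ} {f : SF} (h : Bd (n + 1) A f) (i : Fin 3) : Bd n A (pd i f) :=
  h.ld [i] (by simp)

theorem Sq_le_of_lint {f : SF} (hf : SmoothS f) {B : ℝ} (hB : 0 ≤ B)
    (h : ∫⁻ x in Q3, qq f x ≤ ENNReal.ofReal B) : Sq f ≤ B := by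
  rw [int_qq hf] at h
  exact (ENNReal.ofReal_le_ofReal_iff hB).1 h

theorem lint_of_Bd {f : SF} (hf : SmoothS f) {n : ℕ} {A : ℝ} (h : Bd n A f) :
    ∫⁻ x in Q3, qq f x ≤ ENNReal.ofReal A := by
  rw [int_qq hf]
  exact ENNReal.ofReal_le_ofReal (h [] (Nat.zero_le _))

theorem int_E1 {f : SF} (hf : SmoothS f) (i : Fin 3) {A : ℝ} (h : Bd 1 A f) :
    ∫⁻ x in Q3, E1 i f x ≤ 2 * ENNReal.ofReal A := by
  unfold E1
  rw [lintegral_add_left (meas_qq hf), two_mul]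
  exact add_le_add (lint_of_Bd hf h) (lint_of_Bd (smooth_pd hf i) (h.pd i))

theorem int_E2 {f : SF} (hf : SmoothS f) (i j : Fin 3) {A : ℝ} (h : Bd 2 A f) :
    ∫⁻ x in Q3, E2 i j f x ≤ 4 * ENNReal.ofReal A := by
  unfold E2
  rw [lintegral_add_left (cont_E1 hf j).measurable,
    show (4 : ℝ≥0∞) * ENNReal.ofReal A = 2 * ENNReal.ofReal A + 2 * ENNReal.ofReal A by ring]
  exact add_le_add (int_E1 hf j (h.mono (by norm_num) le_rfl))
    (int_E1 (smooth_pd hf i) j (h.pd i))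

theorem int_E3 {f : SF} (hf : SmoothS f) {A : ℝ} (h : Bd 3 A f) :
    ∫⁻ x in Q3, E3 f x ≤ 8 * ENNReal.ofReal A := by
  unfold E3
  rw [lintegral_add_left (cont_E2 hf 1 2).measurable,
    show (8 : ℝ≥0∞) * ENNReal.ofReal A = 4 * ENNReal.ofReal A + 4 * ENNReal.ofReal A by ring]
  exact add_le_add (int_E2 hf 1 2 (h.mono (by norm_num) le_rfl))
    (int_E2 (smooth_pd hf 0) 1 2 (h.pd 0))

theorem ofReal64 {A B : ℝ} (hA : 0 ≤ A) :
    ENNReal.ofReal (64 * A * B) = 64 * ENNReal.ofReal A * ENNReal.ofReal B := by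
  rw [ENNReal.ofReal_mul (by positivity), ENNReal.ofReal_mul (by norm_num)]
  simp

theorem bil30 {f g : SF} (hf : SmoothS f) (hg : SmoothS g) {A B : ℝ} (hA : Bd 3 A f)
    (hB : Bd 0 B g) : Sq (fun x => f x * g x) ≤ 64 * A * B := by
  have h1 := hA.nonneg
  have h2 := hB.nonneg
  refine Sq_le_of_lint (hf.mul hg) (by positivity) ((prod30 hf hg).trans ?_)
  rw [ofReal64 h1]
  refine mul_le_mul' ?_ (lint_of_Bd hg hB)
  calc _ ≤ 8 * (8 * ENNReal.ofReal A) := mul_le_mul' le_rfl (int_E3 hf hA)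
    _ = _ := by ring

theorem bil21 {f g : SF} (hf : SmoothS f) (hg : SmoothS g) {A B : ℝ} (hA : Bd 2 A f)
    (hB : Bd 1 B g) : Sq (fun x => f x * g x) ≤ 64 * A * B := by
  have h1 := hA.nonneg
  have h2 := hB.nonneg
  refine Sq_le_of_lint (hf.mul hg) (by positivity) ((prod21 hf hg).trans ?_)
  rw [ofReal64 h1]
  calc _ ≤ 8 * (4 * ENNReal.ofReal A) * (2 * ENNReal.ofReal B) :=
        mul_le_mul' (mul_le_mul' le_rfl (int_E2 hf 0 1 hA)) (int_E1 hg 2 hB)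
    _ = _ := by ring

theorem bil {f g : SF} (hf : SmoothS f) (hg : SmoothS g) {A B : ℝ} {a b : ℕ} (hab : a + b = 3)
    (hA : Bd a A f) (hB : Bd b B g) : Sq (fun x => f x * g x) ≤ 64 * A * B := by
  have hc : (fun x => f x * g x) = fun x => g x * f x := by funext x; ring
  have hc' : 64 * A * B = 64 * B * A := by ring
  have : a = 0 ∨ a = 1 ∨ a = 2 ∨ a = 3 := by omega
  rcases this with rfl | rfl | rfl | rfl
  · obtain rfl : b = 3 := by omega
    rw [hc, hc']; exact bil30 hg hf hB hA
  · obtain rfl : b = 2 := by omega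
    rw [hc, hc']; exact bil21 hg hf hB hA
  · obtain rfl : b = 1 := by omega
    exact bil21 hf hg hA hB
  · obtain rfl : b = 0 := by omega
    exact bil30 hf hg hA hB

theorem int_cont {φ : Pt → ℝ} (h : Continuous φ) : IntegrableOn φ Q3 :=
  h.continuousOn.integrableOn_compact (isCompact_univ_pi fun _ => isCompact_Icc)

theorem Sq_add {f g : SF} (hf : SmoothS f) (hg : SmoothS g) :
    Sq (fun x => f x + g x) ≤ 2 * Sq f + 2 * Sq g := by
  have cf := hf.continuous
  have cg := hg.continuous
  have i1 : IntegrableOn (fun x => f x ^ 2) Q3 := int_cont (cf.pow 2)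
  have i2 : IntegrableOn (fun x => g x ^ 2) Q3 := int_cont (cg.pow 2)
  have i3 : IntegrableOn (fun x => (f x + g x) ^ 2) Q3 := int_cont ((cf.add cg).pow 2)
  unfold Sq
  rw [← integral_const_mul, ← integral_const_mul,
    ← integral_add (i1.const_mul 2) (i2.const_mul 2)]
  refine integral_mono i3 ((i1.const_mul 2).add (i2.const_mul 2)) fun x => ?_
  simp only
  nlinarith [sq_nonneg (f x - g x)]

theorem Sq_lsum {f g : SF} (hf : SmoothS f) (hg : SmoothS g) {M : ℝ} (hM : 0 ≤ M)
    (L : List (List (Fin 3) × List (Fin 3)))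
    (h : ∀ p ∈ L, Sq (fun x => ld p.1 f x * ld p.2 g x) ≤ M) :
    Sq (lsum f g L) ≤ 4 ^ L.length * M := by
  induction L with
  | nil => simp [lsum, Sq]; exact hM
  | cons p L ih =>
    have h1 := ih fun q hq => h q (by simp [hq])
    have h2 := h p (by simp)
    have h3 := Sq_add ((smooth_ld hf p.1).mul (smooth_ld hg p.2)) (smooth_lsum hf hg L)
    have h4 : (1 : ℝ) ≤ 4 ^ L.length := one_le_pow₀ (by norm_num)
    have h5 : M ≤ 4 ^ L.length * M := le_mul_of_one_le_left hM h4
    simp only [lsum, List.length_cons, pow_succ]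
    nlinarith

theorem restL_len_le (l : List (Fin 3)) {s : ℕ} (hl : l.length ≤ s) :
    (4 : ℝ) ^ (restL l).length ≤ 4 ^ 2 ^ s := by
  apply pow_le_pow_right₀ (by norm_num)
  have := restL_length l
  have h2 : 2 ^ l.length ≤ 2 ^ s := Nat.pow_le_pow_right (by norm_num) hl
  omega

theorem mul_Bd {f g : SF} (hf : SmoothS f) (hg : SmoothS g) {A B : ℝ} {s : ℕ} (hs : 3 ≤ s)
    (hA : Bd s A f) (hB : Bd s B g) :
    Bd s (4 * 4 ^ 2 ^ s * (64 * A * B)) (fun x => f x * g x) := by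
  have h1 := hA.nonneg
  have h2 := hB.nonneg
  intro l hl
  rw [ld_mul hf hg]
  have hM : 0 ≤ 64 * A * B := by positivity
  have e1 : Sq (fun x => f x * ld l g x) ≤ 64 * A * B :=
    bil hf (smooth_ld hg l) (a := 3) (b := 0) rfl (hA.mono hs le_rfl) (hB.ld l (by omega))
  have e2 : Sq (lsum f g (restL l)) ≤ 4 ^ (restL l).length * (64 * A * B) := by
    refine Sq_lsum hf hg hM _ fun p hp => ?_
    obtain ⟨_, hp2⟩ := restL_mem l p hp
    refine bil (smooth_ld hf _) (smooth_ld hg _) (a := min 3 (s - p.1.length))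
      (b := 3 - min 3 (s - p.1.length)) (by omega) (hA.ld _ (by omega)) (hB.ld _ (by omega))
  have e3 := Sq_add (hf.mul (smooth_ld hg l)) (smooth_lsum hf hg (restL l))
  have e4 := mul_le_mul_of_nonneg_right (restL_len_le l hl) hM
  have e5 : (1 : ℝ) ≤ 4 ^ 2 ^ s := one_le_pow₀ (by norm_num)
  have e6 := le_mul_of_one_le_left hM e5
  nlinarith

theorem add_Bd {f g : SF} (hf : SmoothS f) (hg : SmoothS g) {A B : ℝ} {s : ℕ}
    (hA : Bd s A f) (hB : Bd s B g) : Bd s (2 * A + 2 * B) (fun x => f x + g x) := by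
  intro l hl
  rw [ld_add hf hg]
  have := Sq_add (smooth_ld hf l) (smooth_ld hg l)
  have h1 := hA l hl
  have h2 := hB l hl
  linarith

theorem vol_Q3 : volume Q3 ≠ ⊤ :=
  (isCompact_univ_pi (fun _ : Fin 3 => isCompact_Icc)).measure_lt_top.ne

theorem Sq_mono {f g : SF} (hf : SmoothS f) (hg : SmoothS g) (h : ∀ x, f x ^ 2 ≤ g x ^ 2) :
    Sq f ≤ Sq g :=
  integral_mono (int_cont (hf.continuous.pow 2)) (int_cont (hg.continuous.pow 2)) h

theorem recip_Bd (c : ℝ) (hc : 0 < c) (s : ℕ) (hs : 4 ≤ s) : ∀ n ≤ s, ∃ C : ℝ, 0 ≤ C ∧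
    ∀ (ρ : SF) (R : ℝ), SmoothS ρ → (∀ x, c ≤ ρ x) → 1 ≤ R → Bd s R ρ →
      Bd n (C * R ^ n) (fun x => (ρ x)⁻¹) := by
  intro n
  induction n with
  | zero =>
    intro _
    refine ⟨Sq fun _ => c⁻¹, Sq_nonneg _, fun ρ R hρ hge hR hB l hl => ?_⟩
    have hh : SmoothS fun x => (ρ x)⁻¹ := hρ.inv fun x => (hc.trans_le (hge x)).ne'
    obtain rfl : l = [] := List.length_eq_zero_iff.1 (by omega)
    simp only [ld, pow_zero, mul_one]
    refine Sq_mono hh contDiff_const fun x => ?_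
    have h0 : 0 < ρ x := hc.trans_le (hge x)
    have : (ρ x)⁻¹ ≤ c⁻¹ := inv_anti₀ hc (hge x)
    have h1 : 0 ≤ (ρ x)⁻¹ := by positivity
    gcongr
  | succ n ih =>
    intro hn
    obtain ⟨C, hC, H⟩ := ih (by omega)
    refine ⟨C + (c⁻¹) ^ 2 * (4 ^ 2 ^ s * (64 * C)), by positivity,
      fun ρ R hρ hge hR hB l hl => ?_⟩
    have hne : ∀ x, ρ x ≠ 0 := fun x => (hc.trans_le (hge x)).ne'
    have hh : SmoothS fun x => (ρ x)⁻¹ := hρ.inv hne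
    have hI := H ρ R hρ hge hR hB
    have hR0 : 0 ≤ R := by linarith
    have hR1 : R ^ n ≤ R ^ (n + 1) := pow_le_pow_right₀ hR (by omega)
    rcases Nat.lt_or_ge l.length (n + 1) with hlt | hge'
    · refine (hI l (by omega)).trans ?_
      have : C * R ^ n ≤ C * R ^ (n + 1) := by gcongr
      have h2 : 0 ≤ (c⁻¹) ^ 2 * (4 ^ 2 ^ s * (64 * C)) * R ^ (n + 1) := by positivity
      nlinarith
    · have hlen : l.length = n + 1 := by omega
      set h : SF := fun x => (ρ x)⁻¹ with hdef
      have hprod : (fun x => ρ x * h x) = fun _ => (1 : ℝ) := by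
        funext x; exact mul_inv_cancel₀ (hne x)
      have hleib := ld_mul hρ hh l
      have hz : ld l (fun x => ρ x * h x) = fun _ => 0 := by
        rw [hprod]
        cases l with
        | nil => simp at hlen
        | cons i l => exact ld_const 1 i l
      rw [hz] at hleib
      have hM : 0 ≤ 64 * R * (C * R ^ n) := by positivity
      have e2 : Sq (lsum ρ h (restL l)) ≤ 4 ^ (restL l).length * (64 * R * (C * R ^ n)) := by
        refine Sq_lsum hρ hh hM _ fun p hp => ?_
        obtain ⟨hp1, hp2⟩ := restL_mem l p hp
        refine bil (smooth_ld hρ _) (smooth_ld hh _) (b := min 3 (p.1.length - 1))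
          (a := 3 - min 3 (p.1.length - 1)) (by omega) (hB.ld _ (by omega)) (hI.ld _ (by omega))
      have e3 : Sq (ld l h) ≤ Sq (fun x => c⁻¹ * lsum ρ h (restL l) x) := by
        refine Sq_mono (smooth_ld hh l) (contDiff_const.mul (smooth_lsum hρ hh _)) fun x => ?_
        have hx := congrFun hleib x
        have : lsum ρ h (restL l) x = - (ρ x * ld l h x) := by linarith
        rw [this]
        have h1 : 1 ≤ c⁻¹ * ρ x := by
          rw [inv_mul_eq_div, one_le_div hc]; exact hge x
        have h2 : 1 ≤ (c⁻¹ * ρ x) ^ 2 := one_le_pow₀ h1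
        calc ld l h x ^ 2 ≤ (c⁻¹ * ρ x) ^ 2 * ld l h x ^ 2 :=
              le_mul_of_one_le_left (sq_nonneg _) h2
          _ = _ := by ring
      have e4 : Sq (fun x => c⁻¹ * lsum ρ h (restL l) x)
          = (c⁻¹) ^ 2 * Sq (lsum ρ h (restL l)) := by
        unfold Sq
        rw [← integral_const_mul]
        congr 1
        funext x
        ring
      have e5 := e2.trans (mul_le_mul_of_nonneg_right (restL_len_le l (hl.trans hn)) hM)
      have e6 : Sq (ld l h) ≤ (c⁻¹) ^ 2 * (4 ^ 2 ^ s * (64 * R * (C * R ^ n))) := by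
        rw [e4] at e3
        exact e3.trans (mul_le_mul_of_nonneg_left e5 (sq_nonneg _))
      refine e6.trans ?_
      have : 0 ≤ C * R ^ (n + 1) := by positivity
      have e7 : (c⁻¹) ^ 2 * (4 ^ 2 ^ s * (64 * R * (C * R ^ n)))
        = (c⁻¹) ^ 2 * (4 ^ 2 ^ s * (64 * C)) * R ^ (n + 1) := by ring
      rw [e7, add_mul]
      linarith

theorem joule_Bd (c : ℝ) (hc : 0 < c) (s : ℕ) (hs : 4 ≤ s) : ∃ C : ℝ, 0 < C ∧
    ∀ (ρ : SF) (F : VF) (R A : ℝ), SmoothS ρ → SmoothV F → (∀ x, c ≤ ρ x) → 1 ≤ R → Bd s R ρ →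
      (∀ i, Bd s A (F i)) →
      SmoothS (fun y => normSq F y / ρ y) ∧
      Bd s (C * A ^ 2 * R ^ s) (fun y => normSq F y / ρ y) := by
  obtain ⟨C, hC, H⟩ := recip_Bd c hc s hs s le_rfl
  set k : ℝ := 4 * 4 ^ 2 ^ s * 64 with hk
  refine ⟨10 * k ^ 2 * C + 1, by positivity, fun ρ F R A hρ hF hge hR hB hA => ?_⟩
  have hne : ∀ x, ρ x ≠ 0 := fun x => (hc.trans_le (hge x)).ne'
  have hh : SmoothS fun x => (ρ x)⁻¹ := hρ.inv hne
  have hI := H ρ R hρ hge hR hB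
  have h1 : ∀ i, Bd s (k * A * A) (fun x => F i x * F i x) := fun i => by
    have := mul_Bd (hF i) (hF i) (by omega : 3 ≤ s) (hA i) (hA i)
    exact this.mono le_rfl (by rw [hk]; apply le_of_eq; ring)
  have s1 : ∀ i, SmoothS (fun x => F i x * F i x) := fun i => (hF i).mul (hF i)
  have h2 := add_Bd (s1 0) (s1 1) (h1 0) (h1 1)
  have h3 := add_Bd ((s1 0).add (s1 1)) (s1 2) h2 (h1 2)
  have s3 := ((s1 0).add (s1 1)).add (s1 2)
  have h4 := mul_Bd s3 hh (by omega : 3 ≤ s) h3 hI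
  have e : (fun y => normSq F y / ρ y)
      = fun x => (F 0 x * F 0 x + F 1 x * F 1 x + F 2 x * F 2 x) * (ρ x)⁻¹ := by
    funext x
    simp only [normSq, Fin.sum_univ_three, div_eq_mul_inv]
    ring
  rw [e]
  refine ⟨s3.mul hh, h4.mono le_rfl ?_⟩
  have : 0 ≤ A ^ 2 * R ^ s := by positivity
  have e2 : 4 * 4 ^ 2 ^ s * (64 * (2 * (2 * (k * A * A) + 2 * (k * A * A)) + 2 * (k * A * A))
    * (C * R ^ s)) = 10 * k ^ 2 * C * (A ^ 2 * R ^ s) := by rw [hk]; ring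
  rw [e2]
  nlinarith

theorem pow_bound (s : ℕ) (K n m : ℝ) (hn : 0 ≤ n) (hnm : n ≤ m) :
    (1 + (2 * n ^ 2 + 2 * K ^ 2)) ^ s ≤ (3 + 2 * K ^ 2) ^ s * (1 + m ^ (2 * (s + 1))) := by
  have hm : 0 ≤ m := hn.trans hnm
  have hK := sq_nonneg K
  have h1 : 1 + (2 * n ^ 2 + 2 * K ^ 2) ≤ (3 + 2 * K ^ 2) * (max 1 m) ^ 2 := by
    have ha : 1 ≤ (max 1 m) ^ 2 := one_le_pow₀ (le_max_left _ _)
    have hb : n ^ 2 ≤ (max 1 m) ^ 2 := by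
      have := hnm.trans (le_max_right 1 m)
      gcongr
    nlinarith
  have h2 : ((max 1 m) ^ 2) ^ s ≤ 1 + m ^ (2 * (s + 1)) := by
    rw [← pow_mul]
    rcases le_total m 1 with h | h
    · rw [max_eq_left h, one_pow]
      have : 0 ≤ m ^ (2 * (s + 1)) := by positivity
      linarith
    · rw [max_eq_right h]
      have : m ^ (2 * s) ≤ m ^ (2 * (s + 1)) := pow_le_pow_right₀ h (by omega)
      linarith
  calc _ ≤ ((3 + 2 * K ^ 2) * (max 1 m) ^ 2) ^ s := pow_le_pow_left₀ (by positivity) h1 s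
    _ = (3 + 2 * K ^ 2) ^ s * ((max 1 m) ^ 2) ^ s := mul_pow _ _ _
    _ ≤ _ := by gcongr

theorem ip_young {f g : SF} (hf : SmoothS f) (hg : SmoothS g) {e : ℝ} (he : 0 < e) :
    ip f g ≤ e * Sq f + 1 / (4 * e) * Sq g := by
  have cf := hf.continuous
  have cg := hg.continuous
  have i1 : IntegrableOn (fun x => f x ^ 2) Q3 := int_cont (cf.pow 2)
  have i2 : IntegrableOn (fun x => g x ^ 2) Q3 := int_cont (cg.pow 2)
  have i3 : IntegrableOn (fun x => f x * g x) Q3 := int_cont (cf.mul cg)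
  unfold Sq ip
  rw [← integral_const_mul, ← integral_const_mul,
    ← integral_add (i1.const_mul _) (i2.const_mul _)]
  refine integral_mono i3 ((i1.const_mul _).add (i2.const_mul _)) fun x => ?_
  simp only
  have : e * f x ^ 2 + 1 / (4 * e) * g x ^ 2 - f x * g x
      = 1 / (4 * e) * (2 * e * f x - g x) ^ 2 := by field_simp; ring
  have h2 : 0 ≤ 1 / (4 * e) * (2 * e * f x - g x) ^ 2 := by positivity
  linarith

/-- estimate of the quadratic Joule-heating term.
Let `s > 7/2` be an integer and `|α| ≤ s`. Suppose `ρ⁰ ∈ H^{s+1}(𝕋³)` with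
`‖ρ⁰‖_{H^{s+1}} ≤ K` and `ρ⁰ ≥ ρ̂ > 0`; let `N ∈ H^s` with `N + ρ⁰ ≥ ρ̂/2`,
`F ∈ H^s(𝕋³;ℝ³)`, `Θ ∈ H^s` (here: smooth periodic). Then for every `γ > 0` there
is `C_γ = C(γ,s,K,ρ̂)` with
`⟨∂^α(|F|²/(N+ρ⁰)), ∂^αΘ⟩_{L²} ≤ γ‖F‖⁴_{H^s} + C_γ(1+‖(N,F)‖^{2(s+1)}_{H^s})‖∂^αΘ‖²_{L²}`. -/
theorem joule_heating_estimate (s : ℕ) (hs : 7/2 < (s:ℝ)) (α : Fin 3 → ℕ)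
    (hα : (∑ i, α i) ≤ s) (K ρhat : ℝ) (hρhat : 0 < ρhat) :
    ∀ γ > (0:ℝ), ∃ C > (0:ℝ),
      ∀ ρ0 : SF, SmoothS ρ0 → PerS ρ0 → HsNorm (s+1) ρ0 ≤ K → (∀ x, ρhat ≤ ρ0 x) →
      ∀ (N Θ : SF) (F : VF), SmoothS N → PerS N → SmoothS Θ → PerS Θ →
        SmoothV F → PerV F → (∀ x, ρhat / 2 ≤ N x + ρ0 x) →
        ip (mderiv α (fun y => normSq F y / (N y + ρ0 y))) (mderiv α Θ)
          ≤ γ * (HsNormV s F) ^ 4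
            + C * (1 + (HsNorm s N + HsNormV s F) ^ (2 * (s + 1)))
                * (L2 (mderiv α Θ)) ^ 2 := by
  have hs4 : 4 ≤ s := by
    have : (3 : ℝ) < s := by linarith
    exact_mod_cast this
  obtain ⟨C0, hC0, H⟩ := joule_Bd (ρhat / 2) (by positivity) s hs4
  intro γ hγ
  have hk : 0 < (3 + 2 * K ^ 2) ^ s := by positivity
  refine ⟨C0 * (3 + 2 * K ^ 2) ^ s / (4 * γ), by positivity, ?_⟩
  intro ρ0 hρ0 _ hK _ N Θ F hN _ hΘ _ hF _ hge
  have hn := HsNorm_nonneg s N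
  have hf := HsNormV_nonneg s F
  set n := HsNorm s N with hn_def
  set v := HsNormV s F with hv_def
  have hK0 : 0 ≤ K := (HsNorm_nonneg _ _).trans hK
  have b1 : Bd s (n ^ 2) N := fun l hl => Sq_ld_le hN s l hl
  have b2 : Bd s (K ^ 2) ρ0 := fun l hl =>
    (Sq_ld_le hρ0 (s + 1) l (by omega)).trans (pow_le_pow_left₀ (HsNorm_nonneg _ _) hK 2)
  have b3 := add_Bd hN hρ0 b1 b2
  have b4 : ∀ i, Bd s (v ^ 2) (F i) := fun i l hl =>
    (Sq_ld_le (hF i) s l hl).trans (HsNorm_le_V s F i)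
  set R : ℝ := 1 + (2 * n ^ 2 + 2 * K ^ 2) with hR
  have hR1 : 1 ≤ R := by
    have : 0 ≤ 2 * n ^ 2 + 2 * K ^ 2 := by positivity
    linarith
  obtain ⟨sm, hB⟩ := H (fun x => N x + ρ0 x) F R (v ^ 2) (hN.add hρ0) hF hge hR1
    (b3.mono le_rfl (by linarith)) b4
  have hα' : (List.replicate (α 0) (0 : Fin 3) ++
      (List.replicate (α 1) 1 ++ List.replicate (α 2) 2)).length ≤ s := by
    simp [Fin.sum_univ_three] at hα ⊢
    omega
  have hb := hB _ hα'
  rw [← mderiv_eq_ld] at hb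
  have smα : SmoothS (mderiv α (fun y => normSq F y / (N y + ρ0 y))) := by
    rw [mderiv_eq_ld]; exact smooth_ld sm _
  have smΘ : SmoothS (mderiv α Θ) := by
    rw [mderiv_eq_ld]; exact smooth_ld hΘ _
  have hRs : 0 < R ^ s := by positivity
  have hy := ip_young smα smΘ (e := γ / (C0 * R ^ s)) (by positivity)
  rw [L2_sq]
  have p1 : γ / (C0 * R ^ s) * Sq (mderiv α (fun y => normSq F y / (N y + ρ0 y)))
      ≤ γ * v ^ 4 := by
    calc _ ≤ γ / (C0 * R ^ s) * (C0 * (v ^ 2) ^ 2 * R ^ s) := by gcongr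
      _ = _ := by field_simp
  have p2 : 1 / (4 * (γ / (C0 * R ^ s)))
      ≤ C0 * (3 + 2 * K ^ 2) ^ s / (4 * γ) * (1 + (n + v) ^ (2 * (s + 1))) := by
    have q := pow_bound s K n (n + v) hn (by linarith)
    calc _ = C0 / (4 * γ) * R ^ s := by field_simp
      _ ≤ C0 / (4 * γ) * ((3 + 2 * K ^ 2) ^ s * (1 + (n + v) ^ (2 * (s + 1)))) := by gcongr
      _ = _ := by ring
  have p3 := mul_le_mul_of_nonneg_right p2 (Sq_nonneg (mderiv α Θ))
  linarith
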